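/- The toric ideal I_{S_4} is generated by its elements of total degree at most 3; that is, I_{S_4} equals the ideal generated by the set {f ∈ I_{S_4} : the total degree of f is at most 3}. -/

import Mathlib

/-- The toric ideal `I_{S_4}`: the kernel of
`φ : ℂ[x_π : π ∈ S_4] → ℂ[t_{ij}]`, `x_π ↦ ∏_i t_{i, π(i)}`. -/
noncomputable def toricIdeal4 : Ideal (MvPolynomial (Equiv.Perm (Fin 4)) ℂ) :=
  RingHom.ker (MvPolynomial.aeval fun π : Equiv.Perm (Fin 4) =>
    ∏ i : Fin 4, MvPolynomial.X (R := ℂ) (i, π i) :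
      MvPolynomial (Equiv.Perm (Fin 4)) ℂ →ₐ[ℂ] MvPolynomial (Fin 4 × Fin 4) ℂ).toRingHom

/-!
A binomial `x^A - x^B` lies in the ideal exactly when the multisets `A` and `B` of permutations have
the same sum of permutation matrices, so it suffices to connect any two such multisets by exchanges
of at most three permutations at a time. Peeling off the elements of `B` one by one, it is enough to
produce a given `π ∈ B` out of `A`. Every entry of `π` is an entry of some `f i ∈ A`. If three
elements of `A` cover `π`, the integral Birkhoff theorem exchanges them for a multiset containing
`π`. Otherwise `π⁻¹ * f i` fixes `i` only, so it is a 3-cycle; as `A₄ / V₄` has only two nontrivial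
elements, `(f j)⁻¹ * f k` lies in `V₄` for some `j ≠ k`. It is then an involution, and interchanging
two values between `f j` and `f k` yields a permutation agreeing with `π` at both `j` and `k`, after
which three permutations do cover `π`.
-/

open Equiv MvPolynomial

section ToricIdeal

variable {σ τ R : Type*} [CommRing R]

theorem ker_le_of_basis_sub_mem {α β M N : Type*} [AddCommGroup M] [AddCommGroup N]
    [Module R M] [Module R N] (b : Module.Basis α R M) (c : Module.Basis β R N)
    {φ : M →ₗ[R] N} {w : α → β} (hφ : ∀ a, φ (b a) = c (w a)) {I : Submodule R M}
    (hI : ∀ a a', w a = w a' → b a - b a' ∈ I) : LinearMap.ker φ ≤ I := by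
  have hfac : (fun a => I.mkQ (b a)).FactorsThrough w := fun a a' h =>
    (Submodule.Quotient.eq I).2 (hI a a' h)
  let ψ : N →ₗ[R] M ⧸ I := c.constr R (Function.extend w (fun a => I.mkQ (b a)) 0)
  have hψ : ψ ∘ₗ φ = I.mkQ := b.ext fun a => by
    rw [LinearMap.comp_apply, hφ, c.constr_basis, hfac.extend_apply]
  calc LinearMap.ker φ ≤ LinearMap.ker (ψ ∘ₗ φ) := LinearMap.ker_le_ker_comp φ ψ
    _ = I := by rw [hψ, Submodule.ker_mkQ]

/-- The toric ideal of the exponent vectors `w s`: the kernel of the monomial map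
`x_s ↦ t ^ (w s)`. -/
noncomputable def toricIdeal (R : Type*) [CommRing R] (w : σ → τ →₀ ℕ) :
    Ideal (MvPolynomial σ R) :=
  RingHom.ker (aeval fun s => monomial (w s) (1 : R))

theorem aeval_monomial_prod_map_X (w : σ → τ →₀ ℕ) (A : Multiset σ) :
    aeval (fun s => monomial (w s) (1 : R)) (A.map (X (R := R))).prod =
      monomial (A.map w).sum 1 := by
  induction A using Multiset.induction_on with
  | empty => simp
  | cons a A ih =>
    rw [Multiset.map_cons, Multiset.prod_cons, map_mul, ih, aeval_X, monomial_mul, one_mul,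
      Multiset.map_cons, Multiset.sum_cons]

theorem prod_map_X_toMultiset (m : σ →₀ ℕ) :
    ((Finsupp.toMultiset m).map X).prod = monomial m (1 : R) := by
  rw [Finsupp.toMultiset_map, Finsupp.prod_toMultiset, monomial_eq, C_1, one_mul,
    Finsupp.prod_mapDomain_index (by simp) fun _ _ _ => pow_add _ _ _]

theorem sub_mem_toricIdeal {w : σ → τ →₀ ℕ} {A B : Multiset σ}
    (h : (A.map w).sum = (B.map w).sum) :
    (A.map X).prod - (B.map X).prod ∈ toricIdeal R w := by
  rw [toricIdeal, RingHom.mem_ker, map_sub, aeval_monomial_prod_map_X, aeval_monomial_prod_map_X,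
    h, sub_self]

theorem toricIdeal_le {w : σ → τ →₀ ℕ} {I : Ideal (MvPolynomial σ R)}
    (h : ∀ A B : Multiset σ, (A.map w).sum = (B.map w).sum →
      (A.map X).prod - (B.map X).prod ∈ I) : toricIdeal R w ≤ I := by
  let φ : MvPolynomial σ R →ₐ[R] MvPolynomial τ R := aeval fun s => monomial (w s) 1
  suffices hker : LinearMap.ker φ.toLinearMap ≤ I.restrictScalars R from fun f hf => hker hf
  refine ker_le_of_basis_sub_mem (basisMonomials σ R) (basisMonomials τ R)
    (w := fun m => ((Finsupp.toMultiset m).map w).sum) (fun m => ?_) fun m m' hm => ?_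
  · simp only [coe_basisMonomials, AlgHom.toLinearMap_apply, φ]
    rw [← prod_map_X_toMultiset, aeval_monomial_prod_map_X]
  · simpa only [coe_basisMonomials, prod_map_X_toMultiset, Submodule.restrictScalars_mem]
      using h _ _ hm

/-- The congruence on multisets of variables induced by an ideal `I`: the monomials `x^A` and `x^B`
agree modulo `I`. -/
def monomialAddCon (I : Ideal (MvPolynomial σ R)) : AddCon (Multiset σ) where
  r A B := (A.map X).prod - (B.map X).prod ∈ I
  iseqv :=
    { refl := fun A => by simp
      symm := fun h => by simpa using I.neg_mem h
      trans := fun h h' => by simpa using I.add_mem h h' }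
  add' h h' := by simpa using I.mul_sub_mul_mem h h'

/-- One direction of the fundamental theorem of Markov bases. -/
theorem toricIdeal_eq_span_of_addConGen {w : σ → τ →₀ ℕ} {r : Multiset σ → Multiset σ → Prop}
    (hr : ∀ A B, addConGen r A B ↔ (A.map w).sum = (B.map w).sum) :
    toricIdeal R w = Ideal.span {f | ∃ A B, r A B ∧ f = (A.map X).prod - (B.map X).prod} := by
  refine le_antisymm (toricIdeal_le fun A B hAB => ?_) (Ideal.span_le.2 ?_)
  · have hle : addConGen r ≤ monomialAddCon (Ideal.span {f : MvPolynomial σ R | ∃ A B, r A B ∧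
        f = (A.map X).prod - (B.map X).prod}) :=
      AddCon.addConGen_le.2 fun A B h => Ideal.subset_span ⟨A, B, h, rfl⟩
    exact hle ((hr A B).2 hAB)
  · rintro f ⟨A, B, hAB, rfl⟩
    exact sub_mem_toricIdeal ((hr A B).1 (AddConGen.Rel.of A B hAB))

theorem totalDegree_prod_map_X_le (A : Multiset σ) :
    ((A.map X).prod : MvPolynomial σ R).totalDegree ≤ A.card := by
  rcases subsingleton_or_nontrivial R with hR | hR
  · simp [Subsingleton.elim (A.map X).prod (0 : MvPolynomial σ R)]
  · exact (totalDegree_multiset_prod _).trans (by simp)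

end ToricIdeal

section PermMatrix

variable {ι : Type*} [DecidableEq ι]

theorem permMatrix_apply {R : Type*} [Zero R] [One R] (π : Perm ι) (i j : ι) :
    π.permMatrix R i j = if π i = j then 1 else 0 := by
  simp [PEquiv.toMatrix_apply, toPEquiv_apply, eq_comm]

theorem permMatrix_add_permMatrix_eq_mul_swap {a b : Perm ι} {k l : ι} (hkl : a l = b k)
    (hlk : b l = a k) :
    a.permMatrix ℕ + b.permMatrix ℕ =
      (a * swap k l).permMatrix ℕ + (b * swap k l).permMatrix ℕ := by
  ext i j
  rcases eq_or_ne i k with rfl | hik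
  · simp [hkl, hlk, add_comm]
  rcases eq_or_ne i l with rfl | hil
  · simp [hkl, hlk, add_comm]
  · simp [swap_apply_of_ne_of_ne hik hil]

theorem exists_exchange_of_sq_eq_one {π a b : Perm ι} {j k : ι} (hjk : j ≠ k) (hj : a j = π j)
    (hk : b k = π k) (hab : (a⁻¹ * b) ^ 2 = 1) :
    ∃ g g' : Perm ι, a.permMatrix ℕ + b.permMatrix ℕ = g.permMatrix ℕ + g'.permMatrix ℕ ∧
      g j = π j ∧ g k = π k := by
  let l := a⁻¹ (b k)
  have hal : a l = b k := by simp [l]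
  have hbl : b l = a k := by
    have hl : a⁻¹ (b l) = k := by
      simpa only [sq, Perm.mul_apply, Perm.one_apply] using Perm.congr_fun hab k
    rwa [Perm.inv_eq_iff_eq] at hl
  have hjl : j ≠ l := by
    rintro h
    rw [← h, hj, hk] at hal
    exact hjk (π.injective hal)
  refine ⟨a * swap k l, b * swap k l, permMatrix_add_permMatrix_eq_mul_swap hal hbl, ?_, ?_⟩
  · rw [Perm.mul_apply, swap_apply_of_ne_of_ne hjk hjl, hj]
  · rw [Perm.mul_apply, swap_apply_left, hal, hk]

/-- The sum of the permutation matrices of a multiset of permutations; its entries are the exponents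
of the image of `∏ x_π` under the monomial map `x_π ↦ ∏ t_{i, π(i)}`. -/
def permMatrixSum : Multiset (Perm ι) →+ Matrix ι ι ℕ :=
  Multiset.sumAddMonoidHom.comp (Multiset.mapAddMonoidHom fun π => π.permMatrix ℕ)

@[simp]
theorem permMatrixSum_cons (π : Perm ι) (A : Multiset (Perm ι)) :
    permMatrixSum (π ::ₘ A) = π.permMatrix ℕ + permMatrixSum A := by
  simp [permMatrixSum]

theorem permMatrixSum_apply_ne_zero {A : Multiset (Perm ι)} {i j : ι} :
    permMatrixSum A i j ≠ 0 ↔ ∃ a ∈ A, a i = j := by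
  induction A using Multiset.induction_on with
  | empty => simp
  | cons π A ih =>
    simp only [permMatrixSum_cons, Matrix.add_apply, permMatrix_apply, Multiset.mem_cons,
      or_and_right, exists_or, exists_eq_left, ← ih]
    split_ifs with h <;> simp [h]

end PermMatrix

section Semimagic

variable {ι : Type*} [Fintype ι]

/-- A square matrix of natural numbers all of whose rows and columns sum to `d`. -/
def IsSemimagic (M : Matrix ι ι ℕ) (d : ℕ) : Prop :=
  (∀ i, ∑ j, M i j = d) ∧ ∀ j, ∑ i, M i j = d

theorem IsSemimagic.add {M N : Matrix ι ι ℕ} {d e : ℕ} (hM : IsSemimagic M d)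
    (hN : IsSemimagic N e) : IsSemimagic (M + N) (d + e) :=
  ⟨fun i => by simp [Finset.sum_add_distrib, hM.1 i, hN.1 i],
    fun j => by simp [Finset.sum_add_distrib, hM.2 j, hN.2 j]⟩

theorem IsSemimagic.of_add {M N : Matrix ι ι ℕ} {d e : ℕ} (hMN : IsSemimagic (M + N) (d + e))
    (hM : IsSemimagic M d) : IsSemimagic N e :=
  ⟨fun i => by simpa [Finset.sum_add_distrib, hM.1 i] using hMN.1 i,
    fun j => by simpa [Finset.sum_add_distrib, hM.2 j] using hMN.2 j⟩

theorem IsSemimagic.eq_zero {M : Matrix ι ι ℕ} (hM : IsSemimagic M 0) : M = 0 := by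
  ext i j
  exact Finset.sum_eq_zero_iff.1 (hM.1 i) j (Finset.mem_univ j)

theorem IsSemimagic.exists_perm_forall_ne_zero {M : Matrix ι ι ℕ} {d : ℕ} (hM : IsSemimagic M d)
    (hd : d ≠ 0) : ∃ π : Perm ι, ∀ i, M i (π i) ≠ 0 := by
  classical
  have hd' : (d : ℚ) ≠ 0 := Nat.cast_ne_zero.2 hd
  let D : Matrix ι ι ℚ := .of fun i j => M i j / d
  have hD : D ∈ doublyStochastic ℚ ι := by
    refine mem_doublyStochastic_iff_sum.2 ⟨fun i j => ?_, fun i => ?_, fun j => ?_⟩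
    · exact div_nonneg (Nat.cast_nonneg _) (Nat.cast_nonneg _)
    · simp only [D, Matrix.of_apply, ← Finset.sum_div, ← Nat.cast_sum, hM.1 i, div_self hd']
    · simp only [D, Matrix.of_apply, ← Finset.sum_div, ← Nat.cast_sum, hM.2 j, div_self hd']
  obtain ⟨c, hc, hc1, hcD⟩ := exists_eq_sum_perm_of_mem_doublyStochastic hD
  obtain ⟨π, -, hπ⟩ := Finset.exists_ne_zero_of_sum_ne_zero (hc1.trans_ne one_ne_zero)
  refine ⟨π, fun i hi => hπ (le_antisymm ?_ (hc π))⟩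
  calc c π = (c π • π.permMatrix ℚ) i (π i) := by simp [PEquiv.toMatrix_apply]
    _ ≤ ∑ ρ, (c ρ • ρ.permMatrix ℚ) i (π i) :=
      Finset.single_le_sum (f := fun ρ : Perm ι => (c ρ • ρ.permMatrix ℚ) i (π i))
        (fun ρ _ => mul_nonneg (hc ρ) (permMatrix_mem_doublyStochastic.1 i (π i)))
        (Finset.mem_univ π)
    _ = 0 := by simp only [← Matrix.sum_apply, hcD, D, Matrix.of_apply, hi, Nat.cast_zero, zero_div]

variable [DecidableEq ι]

theorem isSemimagic_permMatrix (π : Perm ι) : IsSemimagic (π.permMatrix ℕ) 1 :=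
  (mem_doublyStochastic_iff_sum.1 permMatrix_mem_doublyStochastic).2

theorem isSemimagic_permMatrixSum (A : Multiset (Perm ι)) :
    IsSemimagic (permMatrixSum A) A.card := by
  induction A using Multiset.induction_on with
  | empty => simp [IsSemimagic]
  | cons π A ih =>
    rw [permMatrixSum_cons, Multiset.card_cons, add_comm A.card]
    exact (isSemimagic_permMatrix π).add ih

theorem IsSemimagic.exists_permMatrix_add {M : Matrix ι ι ℕ} {d : ℕ} (hM : IsSemimagic M (d + 1))
    {π : Perm ι} (hπ : ∀ i, M i (π i) ≠ 0) :
    ∃ N, M = π.permMatrix ℕ + N ∧ IsSemimagic N d := by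
  have hle : ∀ i j, π.permMatrix ℕ i j ≤ M i j := fun i j => by
    rw [permMatrix_apply]
    split_ifs with hij
    · exact hij ▸ Nat.one_le_iff_ne_zero.2 (hπ i)
    · exact Nat.zero_le _
  have hN : M = π.permMatrix ℕ + .of fun i j => M i j - π.permMatrix ℕ i j := by
    ext i j
    exact (Nat.add_sub_of_le (hle i j)).symm
  refine ⟨_, hN, .of_add (d := 1) ?_ (isSemimagic_permMatrix π)⟩
  rwa [← hN, add_comm]

/-- The integral form of Birkhoff's theorem. -/
theorem IsSemimagic.exists_permMatrixSum_eq {M : Matrix ι ι ℕ} {d : ℕ} (hM : IsSemimagic M d) :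
    ∃ A, permMatrixSum A = M := by
  induction d generalizing M with
  | zero => exact ⟨0, by rw [map_zero, hM.eq_zero]⟩
  | succ d ih =>
    obtain ⟨π, hπ⟩ := hM.exists_perm_forall_ne_zero d.succ_ne_zero
    obtain ⟨N, rfl, hN⟩ := hM.exists_permMatrix_add hπ
    obtain ⟨A, rfl⟩ := ih hN
    exact ⟨π ::ₘ A, permMatrixSum_cons π A⟩

end Semimagic

section KleinFour

open alternatingGroup

variable {ι : Type*} [Fintype ι] [DecidableEq ι]

theorem card_alternatingGroup_quotient_kleinFour (hι : Nat.card ι = 4) :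
    Nat.card (alternatingGroup ι ⧸ kleinFour ι) = 3 := by
  have h := Subgroup.card_eq_card_quotient_mul_card_subgroup (kleinFour ι)
  rw [card_of_card_eq_four hι, kleinFour_card_of_card_eq_four hι] at h
  lia

theorem sq_eq_one_of_mem_kleinFour (hι : Nat.card ι = 4) {g : alternatingGroup ι}
    (hg : g ∈ kleinFour ι) : g ^ 2 = 1 := by
  have h := Monoid.pow_exponent_eq_one (⟨g, hg⟩ : kleinFour ι)
  rw [exponent_kleinFour_of_card_eq_four hι] at h
  exact congrArg Subtype.val h

theorem isThreeCycle_of_forall_apply_eq_self_iff (hι : Nat.card ι = 4) {π : Perm ι} {i : ι}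
    (h : ∀ l, π l = l ↔ l = i) : π.IsThreeCycle := by
  have hsupp : π.support = Finset.univ.erase i := by
    ext l
    simp [h]
  rw [← card_support_eq_three_iff, hsupp, Finset.card_erase_of_mem (Finset.mem_univ i),
    Finset.card_univ, ← Nat.card_eq_fintype_card, hι]

theorem notMem_kleinFour_of_isThreeCycle (hι : Nat.card ι = 4) {g : alternatingGroup ι}
    (hg : (g : Perm ι).IsThreeCycle) : g ∉ kleinFour ι := fun h => by
  have hsq : (g : Perm ι) ^ 2 = 1 := congrArg Subtype.val (sq_eq_one_of_mem_kleinFour hι h)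
  have hdvd : 3 ∣ 2 := hg.orderOf ▸ orderOf_dvd_of_pow_eq_one hsq
  lia

theorem exists_ne_inv_mul_sq_eq_one_of_isThreeCycle {κ : Type*} [Fintype κ]
    (hκ : 2 < Fintype.card κ) (hι : Nat.card ι = 4) {c : κ → Perm ι}
    (hc : ∀ i, (c i).IsThreeCycle) : ∃ j k, j ≠ k ∧ ((c j)⁻¹ * c k) ^ 2 = 1 := by
  classical
  have := normal_kleinFour hι
  let g : κ → alternatingGroup ι := fun i => ⟨c i, (hc i).mem_alternatingGroup⟩
  let nontrivialCosets : Finset (alternatingGroup ι ⧸ kleinFour ι) := Finset.univ.erase 1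
  have hcosets : nontrivialCosets.card = 2 := by
    rw [Finset.card_erase_of_mem (Finset.mem_univ 1), Finset.card_univ,
      ← Nat.card_eq_fintype_card, card_alternatingGroup_quotient_kleinFour hι]
  have hmaps : Set.MapsTo (fun i => (g i : alternatingGroup ι ⧸ kleinFour ι))
      (Finset.univ : Finset κ) nontrivialCosets := fun i _ => by
    simpa [nontrivialCosets] using notMem_kleinFour_of_isThreeCycle hι (hc i)
  obtain ⟨j, -, k, -, hjk, hg⟩ := Finset.exists_ne_map_eq_of_card_lt_of_maps_to
    (by rwa [hcosets, Finset.card_univ]) hmaps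
  exact ⟨j, k, hjk, congrArg Subtype.val (sq_eq_one_of_mem_kleinFour hι (QuotientGroup.eq.1 hg))⟩

end KleinFour

theorem exists_ne_inv_mul_sq_eq_one_of_apply_eq_iff {ι : Type*} [Fintype ι]
    (hι : Fintype.card ι = 4) {π : Perm ι} {f : ι → Perm ι} (hf : ∀ k j, f k j = π j ↔ j = k) :
    ∃ j k, j ≠ k ∧ ((f j)⁻¹ * f k) ^ 2 = 1 := by
  classical
  have hι' : Nat.card ι = 4 := Nat.card_eq_fintype_card.trans hι
  have hcycle : ∀ k, (π⁻¹ * f k).IsThreeCycle := fun k =>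
    isThreeCycle_of_forall_apply_eq_self_iff hι' fun j => by
      rw [Perm.mul_apply, Perm.inv_eq_iff_eq, hf]
  obtain ⟨j, k, hjk, h⟩ := exists_ne_inv_mul_sq_eq_one_of_isThreeCycle (by lia) hι' hcycle
  exact ⟨j, k, hjk, by simpa [mul_assoc] using h⟩

theorem exists_finset_cover_of_apply_eq_apply_eq {ι : Type*} [Fintype ι] {d : ℕ}
    (hι : Fintype.card ι ≤ d + 1) {g π : Perm ι} {C : Multiset (Perm ι)} {j k : ι} (hjk : j ≠ k)
    (hgj : g j = π j) (hgk : g k = π k)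
    (hC : ∀ i, i ≠ j → i ≠ k → ∃ c ∈ C, c i = π i) :
    ∃ T : Finset (Perm ι), (∀ t ∈ T, t ∈ g ::ₘ C) ∧ T.card ≤ d ∧ ∀ i, ∃ t ∈ T, t i = π i := by
  classical
  choose! f hfC hf using hC
  let S : Finset ι := {j, k}ᶜ
  have hS : ∀ i, i ∈ S ↔ i ≠ j ∧ i ≠ k := by simp [S]
  refine ⟨insert g (S.image f), ?_, ?_, fun i => ?_⟩
  · simp only [Finset.mem_insert, Finset.mem_image, Multiset.mem_cons, hS]
    rintro _ (rfl | ⟨i, ⟨hij, hik⟩, rfl⟩)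
    · exact .inl rfl
    · exact .inr (hfC i hij hik)
  · have hScard : S.card = Fintype.card ι - 2 := by
      rw [Finset.card_compl, Finset.card_pair hjk]
    have hone_lt : 1 < Fintype.card ι := Fintype.one_lt_card_iff.2 ⟨j, k, hjk⟩
    calc (insert g (S.image f)).card ≤ (S.image f).card + 1 := Finset.card_insert_le _ _
      _ ≤ S.card + 1 := Nat.succ_le_succ Finset.card_image_le
      _ ≤ d := by lia
  · rcases eq_or_ne i j with rfl | hij
    · exact ⟨g, Finset.mem_insert_self _ _, hgj⟩
    rcases eq_or_ne i k with rfl | hik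
    · exact ⟨g, Finset.mem_insert_self _ _, hgk⟩
    · exact ⟨f i, Finset.mem_insert_of_mem (Finset.mem_image_of_mem f ((hS i).2 ⟨hij, hik⟩)),
        hf i hij hik⟩

section Moves

variable {ι : Type*} [DecidableEq ι]

theorem card_eq_of_permMatrixSum_eq [Finite ι] [Nonempty ι] {A B : Multiset (Perm ι)}
    (h : permMatrixSum A = permMatrixSum B) : A.card = B.card := by
  have := Fintype.ofFinite ι
  obtain ⟨i⟩ := ‹Nonempty ι›
  rw [← (isSemimagic_permMatrixSum A).1 i, h, (isSemimagic_permMatrixSum B).1 i]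

theorem exists_permMatrixSum_cons_eq [Finite ι] [Nonempty ι] {A : Multiset (Perm ι)} {π : Perm ι}
    (hπ : ∀ i, ∃ a ∈ A, a i = π i) : ∃ B, permMatrixSum (π ::ₘ B) = permMatrixSum A := by
  have := Fintype.ofFinite ι
  obtain ⟨i⟩ := ‹Nonempty ι›
  obtain ⟨a, ha, -⟩ := hπ i
  obtain ⟨d, hd⟩ := Nat.exists_eq_add_one_of_ne_zero
    (Multiset.card_pos_iff_exists_mem.2 ⟨a, ha⟩).ne'
  have hA : IsSemimagic (permMatrixSum A) (d + 1) := by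
    rw [← hd]
    exact isSemimagic_permMatrixSum A
  obtain ⟨N, hN, hNd⟩ := hA.exists_permMatrix_add fun i => permMatrixSum_apply_ne_zero.2 (hπ i)
  obtain ⟨B, rfl⟩ := hNd.exists_permMatrixSum_eq
  exact ⟨B, by rw [permMatrixSum_cons, hN]⟩

/-- The congruence generated by replacing at most `d` permutations by others with the same sum of
permutation matrices. -/
def moveAddCon (ι : Type*) [DecidableEq ι] (d : ℕ) : AddCon (Multiset (Perm ι)) :=
  addConGen fun A B => permMatrixSum A = permMatrixSum B ∧ A.card ≤ d

variable {d : ℕ}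

theorem moveAddCon_of_card_le {A B : Multiset (Perm ι)} (h : permMatrixSum A = permMatrixSum B)
    (hA : A.card ≤ d) : moveAddCon ι d A B :=
  AddConGen.Rel.of A B ⟨h, hA⟩

theorem permMatrixSum_eq_of_moveAddCon {A B : Multiset (Perm ι)} (h : moveAddCon ι d A B) :
    permMatrixSum A = permMatrixSum B := by
  have hle : moveAddCon ι d ≤ AddCon.ker permMatrixSum := AddCon.addConGen_le.2 fun _ _ h => h.1
  exact hle h

theorem exists_moveAddCon_cons_of_cover [Finite ι] [Nonempty ι] {A : Multiset (Perm ι)} {π : Perm ι}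
    (T : Finset (Perm ι)) (hTA : ∀ a ∈ T, a ∈ A) (hTd : T.card ≤ d)
    (hπ : ∀ i, ∃ a ∈ T, a i = π i) : ∃ B, moveAddCon ι d A (π ::ₘ B) := by
  obtain ⟨C, rfl⟩ := Multiset.le_iff_exists_add.1 ((Multiset.le_iff_subset T.nodup).2 hTA)
  obtain ⟨B, hB⟩ := exists_permMatrixSum_cons_eq hπ
  refine ⟨B + C, ?_⟩
  rw [← Multiset.cons_add]
  exact (moveAddCon ι d).add (moveAddCon_of_card_le hB.symm hTd) ((moveAddCon ι d).refl C)

variable [Fintype ι]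

theorem exists_moveAddCon_cons_of_exchange (hd : 2 ≤ d) (hι : Fintype.card ι ≤ d + 1)
    {a b g g' π : Perm ι} {C : Multiset (Perm ι)}
    (hg : a.permMatrix ℕ + b.permMatrix ℕ = g.permMatrix ℕ + g'.permMatrix ℕ) {j k : ι}
    (hjk : j ≠ k) (hgj : g j = π j) (hgk : g k = π k)
    (hC : ∀ i, i ≠ j → i ≠ k → ∃ c ∈ C, c i = π i) :
    ∃ B, moveAddCon ι d (a ::ₘ b ::ₘ C) (π ::ₘ B) := by
  have : Nonempty ι := ⟨j⟩
  have hpair : moveAddCon ι d {a, b} {g, g'} :=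
    moveAddCon_of_card_le (by simpa [permMatrixSum] using hg) (by simpa using hd)
  have hmove : moveAddCon ι d (a ::ₘ b ::ₘ C) (g ::ₘ g' ::ₘ C) := by
    simpa using (moveAddCon ι d).add hpair ((moveAddCon ι d).refl C)
  obtain ⟨T, hTC, hTd, hTπ⟩ := exists_finset_cover_of_apply_eq_apply_eq hι hjk hgj hgk hC
  have hT : ∀ t ∈ T, t ∈ g ::ₘ g' ::ₘ C := fun t ht =>
    Multiset.mem_of_le (Multiset.cons_le_cons g (Multiset.le_cons_self C g')) (hTC t ht)
  obtain ⟨B, hB⟩ := exists_moveAddCon_cons_of_cover T hT hTd hTπ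
  exact ⟨B, (moveAddCon ι d).trans hmove hB⟩

theorem exists_moveAddCon_cons_of_apply_eq_iff (hι : Fintype.card ι = 4) {A : Multiset (Perm ι)}
    {π : Perm ι} {f : ι → Perm ι} (hfA : ∀ i, f i ∈ A) (hf : ∀ k j, f k j = π j ↔ j = k) :
    ∃ B, moveAddCon ι 3 A (π ::ₘ B) := by
  have hfπ : ∀ i, f i i = π i := fun i => (hf i i).2 rfl
  have hinj : f.Injective := fun i j hij => (hf j i).1 (hij ▸ hfπ i)
  obtain ⟨j, k, hjk, hsq⟩ := exists_ne_inv_mul_sq_eq_one_of_apply_eq_iff hι hf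
  obtain ⟨g, g', hg, hgj, hgk⟩ := exists_exchange_of_sq_eq_one hjk (hfπ j) (hfπ k) hsq
  obtain ⟨C, rfl⟩ := Multiset.exists_cons_of_mem (hfA j)
  obtain ⟨C, rfl⟩ := Multiset.exists_cons_of_mem
    ((Multiset.mem_cons.1 (hfA k)).resolve_left (hinj.ne hjk.symm))
  refine exists_moveAddCon_cons_of_exchange (by lia) hι.le hg hjk hgj hgk fun i hij hik =>
    ⟨f i, ?_, hfπ i⟩
  simpa [hinj.eq_iff, hij, hik] using hfA i

theorem exists_moveAddCon_cons [Nonempty ι] (hι : Fintype.card ι ≤ 4) {A : Multiset (Perm ι)}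
    {π : Perm ι} (hπ : ∀ i, ∃ a ∈ A, a i = π i) : ∃ B, moveAddCon ι 3 A (π ::ₘ B) := by
  choose f hfA hf using hπ
  by_cases hcover : ∃ S : Finset ι, S.card ≤ 3 ∧ ∀ i, ∃ k ∈ S, f k i = π i
  · obtain ⟨S, hS, hSπ⟩ := hcover
    refine exists_moveAddCon_cons_of_cover (S.image f) ?_ (Finset.card_image_le.trans hS) ?_
    · simpa using fun i _ => hfA i
    · simpa using hSπ
  push Not at hcover
  have hcard : Fintype.card ι = 4 := by
    by_contra hne
    obtain ⟨i, hi⟩ := hcover Finset.univ (by rw [Finset.card_univ]; lia)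
    exact hi i (Finset.mem_univ i) (hf i)
  refine exists_moveAddCon_cons_of_apply_eq_iff hcard hfA fun k j => ⟨fun hkj => ?_, ?_⟩
  · by_contra hjk
    obtain ⟨i, hi⟩ := hcover (Finset.univ.erase j) (by
      rw [Finset.card_erase_of_mem (Finset.mem_univ j), Finset.card_univ, hcard])
    rcases eq_or_ne i j with rfl | hij
    · exact hi k (by simp [Ne.symm hjk]) hkj
    · exact hi i (by simp [hij]) (hf i)
  · rintro rfl
    exact hf j

theorem moveAddCon_three_iff [Nonempty ι] (hι : Fintype.card ι ≤ 4) {A B : Multiset (Perm ι)} :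
    moveAddCon ι 3 A B ↔ permMatrixSum A = permMatrixSum B := by
  refine ⟨permMatrixSum_eq_of_moveAddCon, fun h => ?_⟩
  induction B using Multiset.induction_on generalizing A with
  | empty =>
    rw [Multiset.card_eq_zero.1 (card_eq_of_permMatrixSum_eq h)]
    exact (moveAddCon ι 3).refl 0
  | cons π B ih =>
    have hπ : ∀ i, ∃ a ∈ A, a i = π i := fun i => by
      rw [← permMatrixSum_apply_ne_zero, h, permMatrixSum_apply_ne_zero]
      exact ⟨π, Multiset.mem_cons_self π B, rfl⟩
    obtain ⟨A', hA'⟩ := exists_moveAddCon_cons hι hπ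
    have hsum : permMatrixSum A' = permMatrixSum B := by
      have := (permMatrixSum_eq_of_moveAddCon hA').symm.trans h
      rwa [permMatrixSum_cons, permMatrixSum_cons, add_right_inj] at this
    have hcons : moveAddCon ι 3 (π ::ₘ A') (π ::ₘ B) := by
      simpa using (moveAddCon ι 3).add ((moveAddCon ι 3).refl {π}) (ih hsum)
    exact (moveAddCon ι 3).trans hA' hcons

end Moves

section PermToricIdeal

variable {ι : Type*} [Fintype ι]

/-- The exponent vector of the monomial `∏ t_{i, π(i)}`, so that `toricIdeal R permExponent` is the
toric ideal of the permutations of `ι`. -/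
noncomputable def permExponent (π : Perm ι) : ι × ι →₀ ℕ :=
  ∑ i, Finsupp.single (i, π i) 1

theorem monomial_permExponent {R : Type*} [CommRing R] (π : Perm ι) :
    monomial (permExponent π) (1 : R) = ∏ i, X (i, π i) :=
  monomial_sum_one _ _

variable [DecidableEq ι]

theorem permExponent_apply (π : Perm ι) (i j : ι) :
    permExponent π (i, j) = π.permMatrix ℕ i j := by
  rw [permExponent, Finsupp.finsetSum_apply, Finset.sum_eq_single i]
  · simp [Finsupp.single_apply]
  · intro k _ hk
    simp [hk]
  · simp

theorem sum_map_permExponent_apply (A : Multiset (Perm ι)) (i j : ι) :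
    (A.map permExponent).sum (i, j) = permMatrixSum A i j := by
  induction A using Multiset.induction_on with
  | empty => simp
  | cons π A ih => simp [ih, permExponent_apply]

theorem sum_map_permExponent_eq_iff {A B : Multiset (Perm ι)} :
    (A.map permExponent).sum = (B.map permExponent).sum ↔ permMatrixSum A = permMatrixSum B := by
  simp only [Finsupp.ext_iff, Prod.forall, sum_map_permExponent_apply, ← Matrix.ext_iff]

theorem toricIdeal_permExponent_eq_span (R : Type*) [CommRing R] [Nonempty ι] {d : ℕ}
    (h : ∀ A B, moveAddCon ι d A B ↔ permMatrixSum A = permMatrixSum B) :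
    toricIdeal R (permExponent (ι := ι)) =
      Ideal.span {f | f ∈ toricIdeal R permExponent ∧ f.totalDegree ≤ d} := by
  refine le_antisymm ?_ (Ideal.span_le.2 fun f hf => hf.1)
  have hspan := toricIdeal_eq_span_of_addConGen (R := R) fun A B =>
    (h A B).trans sum_map_permExponent_eq_iff.symm
  refine hspan.trans_le (Ideal.span_mono ?_)
  rintro _ ⟨A, B, ⟨hAB, hA⟩, rfl⟩
  have hB : B.card ≤ d := card_eq_of_permMatrixSum_eq hAB ▸ hA
  exact ⟨sub_mem_toricIdeal (sum_map_permExponent_eq_iff.2 hAB), (totalDegree_sub _ _).trans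
    (max_le ((totalDegree_prod_map_X_le A).trans hA) ((totalDegree_prod_map_X_le B).trans hB))⟩

end PermToricIdeal

theorem toricIdeal4_eq_toricIdeal : toricIdeal4 = toricIdeal ℂ (permExponent (ι := Fin 4)) := by
  simp only [toricIdeal, monomial_permExponent]
  rfl

theorem toricIdeal4_generated_in_degree_three_general (R : Type*) [CommRing R] {ι : Type*}
    [Fintype ι] [Nonempty ι] (hι : Fintype.card ι ≤ 4) :
    toricIdeal R (permExponent (ι := ι)) =
      Ideal.span {f | f ∈ toricIdeal R permExponent ∧ f.totalDegree ≤ 3} := by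
  classical
  exact toricIdeal_permExponent_eq_span R fun _ _ => moveAddCon_three_iff hι

/-- The toric ideal `I_{S_4}` is generated by its elements of total degree at most 3. -/
theorem toricIdeal4_generated_in_degree_three :
    toricIdeal4 = Ideal.span {f : MvPolynomial (Equiv.Perm (Fin 4)) ℂ |
      f ∈ toricIdeal4 ∧ f.totalDegree ≤ 3} := by
  rw [toricIdeal4_eq_toricIdeal]
  exact toricIdeal4_generated_in_degree_three_general ℂ (Fintype.card_fin 4).le
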